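/- Let P ⊆ ℝ^d be a d-dimensional simplicial reflexive polytope and let v, w, w' ∈ 𝒱(P) be pairwise distinct vertices such that w ≠ −v, w' ≠ −v, v ≁ w and v ≁ w'. Then the linear span L of {v, w, w'} is a 2-dimensional subspace, and P ∩ L is a 2-dimensional polytope which is reflexive with respect to the rank-2 lattice ℤ^d ∩ L (i.e. the linear extension of any lattice isomorphism ℤ^d ∩ L → ℤ² maps P ∩ L onto a reflexive polygon) and has at least five vertices. -/

import Mathlib

noncomputable section

/-- The standard inner product on `ℝ^d`. -/
def dotp {d : ℕ} (x y : Fin d → ℝ) : ℝ := ∑ i, x i * y i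

/-- `x` is a point of the lattice `ℤ^d`. -/
def IsLP {d : ℕ} (x : Fin d → ℝ) : Prop := ∀ i, ∃ n : ℤ, x i = (n : ℝ)

/-- A lattice polytope: convex hull of finitely many lattice points. -/
def IsLatticePolytope {d : ℕ} (P : Set (Fin d → ℝ)) : Prop :=
  ∃ V : Finset (Fin d → ℝ), (∀ v ∈ V, IsLP v) ∧ P = convexHull ℝ (V : Set (Fin d → ℝ))

/-- The dual polytope `P* = {x | ⟨x,y⟩ ≤ 1 ∀ y ∈ P}`. -/
def dualPolytope {d : ℕ} (P : Set (Fin d → ℝ)) : Set (Fin d → ℝ) :=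
  {x | ∀ y ∈ P, dotp x y ≤ 1}

/-- `P` is a reflexive polytope: a (`d`-dimensional) lattice polytope with `0` in its
interior whose dual is again a lattice polytope. -/
def IsReflexive {d : ℕ} (P : Set (Fin d → ℝ)) : Prop :=
  IsLatticePolytope P ∧ (0 : Fin d → ℝ) ∈ interior P ∧ IsLatticePolytope (dualPolytope P)

/-- `F` is a facet of `P` with (uniquely determined) outer normal `u`, normalized by
`⟨u, F⟩ = 1` (possible since `0` is in the interior of `P`). -/
def IsFacetNormal {d : ℕ} (P F : Set (Fin d → ℝ)) (u : Fin d → ℝ) : Prop :=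
  F.Nonempty ∧ (∀ y ∈ P, dotp u y ≤ 1) ∧ F = {y ∈ P | dotp u y = 1} ∧
    Module.finrank ℝ (vectorSpan ℝ F) = d - 1

/-- `F` is a facet of `P`. -/
def IsFacet {d : ℕ} (P F : Set (Fin d → ℝ)) : Prop := ∃ u, IsFacetNormal P F u

/-- `P` is simplicial: every facet has exactly `d` vertices. -/
def IsSimplicial {d : ℕ} (P : Set (Fin d → ℝ)) : Prop :=
  ∀ F, IsFacet P F → (Set.extremePoints ℝ F).ncard = d

/-!
A facet of a simplicial reflexive polytope `P` is encoded by its normal `u`, a vertex of the lattice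
polytope `P*`, so `⟨u, ·⟩` takes integer values at most `1` on the lattice points of `P`. Hence the
sum of two lattice points of `P` on no common facet lies in `P` again. If `v + w + w' ≠ 0`, this
sum is a lattice point of `∂P`; on a facet containing it, integrality leaves few values for
`⟨u, v⟩`, `⟨u, w⟩`, `⟨u, w'⟩`, and passing to neighboring facets excludes all of them except
`-1, 1, 1`, where `w + w' = -2v`. So in any case `w + w' = -c v` with `c > 0`, and `L` is a plane.

Polars of sections by lattice subspaces are linear images of `P*`, hence lattice polytopes. It
remains to see that `P ∩ L` is a lattice polygon: the cones spanned by two of `v`, `w`, `w'` cover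
`L`, and in each of them the sum of two nonadjacent generators gives enough lattice points. Since
`v + w` and `v + w'` lie in `P ∩ L`, there is a vertex of `P ∩ L` strictly between `v` and `w`, and
one strictly between `v` and `w'`, which together with `v`, `w`, `w'` makes five.
-/

open Module (Basis finrank)
open Set Topology

section LatticePoints

variable {d : ℕ} {x y : Fin d → ℝ}

lemma isLP_iff_mem_span : IsLP x ↔ x ∈ Submodule.span ℤ (range (Pi.basisFun ℝ (Fin d))) := by
  simp only [Basis.mem_span_iff_repr_mem, Pi.basisFun_repr, IsLP, mem_range, algebraMap_int_eq,
    eq_intCast, eq_comm]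

lemma IsLP.add (hx : IsLP x) (hy : IsLP y) : IsLP (x + y) := by
  rw [isLP_iff_mem_span] at *
  exact add_mem hx hy

lemma IsLP.natCast_smul (hx : IsLP x) (n : ℕ) : IsLP ((n : ℝ) • x) := by
  rw [isLP_iff_mem_span] at *
  simpa only [Nat.cast_smul_eq_nsmul] using nsmul_mem hx n

lemma isLP_single_one (i : Fin d) : IsLP (Pi.single i 1) :=
  isLP_iff_mem_span.2 (Submodule.subset_span ⟨i, Pi.basisFun_apply ℝ (Fin d) i⟩)

lemma IsLP.exists_int_dotProduct (hx : IsLP x) (hy : IsLP y) : ∃ n : ℤ, x ⬝ᵥ y = n := by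
  choose a ha using hx
  choose b hb using hy
  exact ⟨a ⬝ᵥ b, by simp [dotProduct, ha, hb]⟩

lemma finite_setOf_mem_and_isLP {K : Set (Fin d → ℝ)} (hK : Bornology.IsBounded K) :
    {x ∈ K | IsLP x}.Finite := by
  simp only [isLP_iff_mem_span]
  exact ZSpan.setFinite_inter (Pi.basisFun ℝ (Fin d)) hK

end LatticePoints

section LatticePolytopes

variable {d : ℕ} {K P : Set (Fin d → ℝ)} {x : Fin d → ℝ}

/-- The integer hull of `K`: the convex hull of the lattice points of `K`. It measures how far a
convex body is from being a lattice polytope. -/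
def integerHull (K : Set (Fin d → ℝ)) : Set (Fin d → ℝ) := convexHull ℝ {x ∈ K | IsLP x}

lemma mem_integerHull (hx : x ∈ K) (hl : IsLP x) : x ∈ integerHull K :=
  subset_convexHull ℝ _ ⟨hx, hl⟩

lemma isLatticePolytope_of_subset_integerHull (hb : Bornology.IsBounded K) (hc : Convex ℝ K)
    (h : K ⊆ integerHull K) : IsLatticePolytope K := by
  have hfin := finite_setOf_mem_and_isLP hb
  refine ⟨hfin.toFinset, fun x hx => (hfin.mem_toFinset.1 hx).2, ?_⟩
  rw [hfin.coe_toFinset]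
  exact h.antisymm (convexHull_min (fun x hx => hx.1) hc)

namespace IsLatticePolytope

lemma isLP_of_mem_extremePoints (h : IsLatticePolytope P) (hx : x ∈ P.extremePoints ℝ) :
    IsLP x := by
  obtain ⟨V, hV, rfl⟩ := h
  exact hV x (extremePoints_convexHull_subset hx)

lemma isCompact (h : IsLatticePolytope P) : IsCompact P := by
  obtain ⟨V, -, rfl⟩ := h
  exact V.finite_toSet.isCompact_convexHull ℝ

lemma convex (h : IsLatticePolytope P) : Convex ℝ P := by
  obtain ⟨V, -, rfl⟩ := h
  exact convex_convexHull ℝ _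

lemma finite_extremePoints (h : IsLatticePolytope P) : (P.extremePoints ℝ).Finite := by
  obtain ⟨V, -, rfl⟩ := h
  exact V.finite_toSet.subset extremePoints_convexHull_subset

lemma convexHull_extremePoints (h : IsLatticePolytope P) :
    convexHull ℝ (P.extremePoints ℝ) = P := by
  rw [← (h.finite_extremePoints.isCompact_convexHull ℝ).isClosed.closure_eq,
    closure_convexHull_extremePoints h.isCompact h.convex]

lemma image {m : ℕ} (h : IsLatticePolytope P) (f : (Fin d → ℝ) →ₗ[ℝ] (Fin m → ℝ))
    (hf : ∀ x, IsLP x → IsLP (f x)) : IsLatticePolytope (f '' P) := by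
  classical
  obtain ⟨V, hV, rfl⟩ := h
  refine ⟨V.image f, ?_, by rw [f.image_convexHull, Finset.coe_image]⟩
  simpa using fun x hx => hf x (hV x hx)

end IsLatticePolytope

end LatticePolytopes

section Polarity

variable {d : ℕ} {K S : Set (Fin d → ℝ)} {u : Fin d → ℝ}

lemma mem_dualPolytope : u ∈ dualPolytope K ↔ ∀ y ∈ K, u ⬝ᵥ y ≤ 1 := Iff.rfl

lemma zero_mem_dualPolytope : (0 : Fin d → ℝ) ∈ dualPolytope K := fun y _ =>
  (zero_dotProduct y).trans_le zero_le_one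

lemma dualPolytope_convexHull : dualPolytope (convexHull ℝ S) = dualPolytope S := by
  refine Subset.antisymm (fun u hu y hy => hu y (subset_convexHull ℝ S hy)) fun u hu => ?_
  exact convexHull_min (t := {y | u ⬝ᵥ y ≤ 1}) hu
    (convex_halfSpace_le (dotProductBilin ℝ ℝ u).isLinear 1)

lemma dualPolytope_dualPolytope (hc : Convex ℝ K) (hcl : IsClosed K) (h0 : 0 ∈ K) :
    dualPolytope (dualPolytope K) = K := by
  refine Subset.antisymm (fun x hx => ?_) fun x hx u hu => ?_
  · by_contra hxK
    obtain ⟨f, s, hf, hs⟩ := geometric_hahn_banach_closed_point hc hcl hxK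
    obtain ⟨a, ha⟩ := (dotProductEquiv ℝ (Fin d)).surjective f
    have hfa (z : Fin d → ℝ) : f z = a ⬝ᵥ z := (LinearMap.congr_fun ha z).symm
    have hs0 : 0 < s := by simpa using hf 0 h0
    have ha_mem : s⁻¹ • a ∈ dualPolytope K := mem_dualPolytope.2 fun y hy => by
      rw [smul_dotProduct, smul_eq_mul, ← hfa, inv_mul_le_iff₀ hs0, mul_one]
      exact (hf y hy).le
    have := mem_dualPolytope.1 hx _ ha_mem
    rw [dotProduct_comm, smul_dotProduct, smul_eq_mul, ← hfa, inv_mul_le_iff₀ hs0] at this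
    linarith
  · exact (dotProduct_comm x u).trans_le (hu x hx)

lemma isExtreme_setOf_dotProduct_eq_one (hS : S ⊆ K) :
    IsExtreme ℝ (dualPolytope K) {u ∈ dualPolytope K | ∀ y ∈ S, u ⬝ᵥ y = 1} := by
  refine ⟨fun u hu => hu.1, ?_⟩
  rintro a ha b hb _ ⟨-, h⟩ ⟨s, t, hs, ht, hst, rfl⟩
  refine ⟨ha, fun y hy => ?_⟩
  have hsum := h y hy
  simp only [add_dotProduct, smul_dotProduct, smul_eq_mul] at hsum
  have hay : a ⬝ᵥ y ≤ 1 := ha y (hS hy)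
  have hby : b ⬝ᵥ y ≤ 1 := hb y (hS hy)
  nlinarith

end Polarity

/-- A convex body with `0` in its interior whose polar is a lattice polytope. Unlike reflexivity,
this passes to sections by lattice subspaces immediately. -/
structure HasLatticePolar {d : ℕ} (K : Set (Fin d → ℝ)) : Prop where
  isCompact : IsCompact K
  convex : Convex ℝ K
  zero_mem_interior : 0 ∈ interior K
  isLatticePolytope_dualPolytope : IsLatticePolytope (dualPolytope K)

lemma IsReflexive.hasLatticePolar {d : ℕ} {P : Set (Fin d → ℝ)} (hP : IsReflexive P) :
    HasLatticePolar P :=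
  ⟨hP.1.isCompact, hP.1.convex, hP.2.1, hP.2.2⟩

/-- The vertices of the polar body. For a polytope `K` these are the outer normals of the facets,
scaled so that the facet of `u` is `{x ∈ K | u ⬝ᵥ x = 1}`. -/
def facetNormals {d : ℕ} (K : Set (Fin d → ℝ)) : Set (Fin d → ℝ) :=
  (dualPolytope K).extremePoints ℝ

/-- The relation `p ∼ q`: some facet, encoded by its normal, contains both `p` and `q`. -/
def FacetAdj {d : ℕ} (K : Set (Fin d → ℝ)) (p q : Fin d → ℝ) : Prop :=
  ∃ u ∈ facetNormals K, u ⬝ᵥ p = 1 ∧ u ⬝ᵥ q = 1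

lemma FacetAdj.symm {d : ℕ} {K : Set (Fin d → ℝ)} {p q : Fin d → ℝ} (h : FacetAdj K p q) :
    FacetAdj K q p :=
  let ⟨u, hu, hp, hq⟩ := h
  ⟨u, hu, hq, hp⟩

lemma eq_zero_of_forall_add_natCast_smul_mem {E : Type*} [NormedAddCommGroup E] [NormedSpace ℝ E]
    {K : Set E} (hK : Bornology.IsBounded K) {p q : E} (h : ∀ n : ℕ, p + (n : ℝ) • q ∈ K) :
    q = 0 := by
  obtain ⟨C, hC⟩ := hK.exists_norm_le
  have hle (n : ℕ) : (n : ℝ) * ‖q‖ ≤ C + ‖p‖ := by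
    calc (n : ℝ) * ‖q‖ = ‖(p + (n : ℝ) • q) - p‖ := by simp [norm_smul]
      _ ≤ ‖p + (n : ℝ) • q‖ + ‖p‖ := norm_sub_le _ _
      _ ≤ C + ‖p‖ := by gcongr; exact hC _ (h n)
  by_contra hq
  obtain ⟨n, hn⟩ := exists_nat_gt ((C + ‖p‖) / ‖q‖)
  rw [div_lt_iff₀ (norm_pos_iff.2 hq)] at hn
  exact (hle n).not_gt hn

namespace HasLatticePolar

variable {d : ℕ} {K : Set (Fin d → ℝ)} {u p q : Fin d → ℝ}

lemma zero_mem (hK : HasLatticePolar K) : (0 : Fin d → ℝ) ∈ K :=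
  interior_subset hK.zero_mem_interior

protected lemma dualPolytope_dualPolytope (hK : HasLatticePolar K) :
    dualPolytope (dualPolytope K) = K :=
  dualPolytope_dualPolytope hK.convex hK.isCompact.isClosed hK.zero_mem

lemma mem_iff (hK : HasLatticePolar K) : p ∈ K ↔ ∀ u ∈ facetNormals K, u ⬝ᵥ p ≤ 1 := by
  calc p ∈ K ↔ p ∈ dualPolytope (convexHull ℝ (facetNormals K)) := by
        rw [facetNormals, hK.isLatticePolytope_dualPolytope.convexHull_extremePoints,
          hK.dualPolytope_dualPolytope]
    _ ↔ ∀ u ∈ facetNormals K, u ⬝ᵥ p ≤ 1 := by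
        simp only [dualPolytope_convexHull, mem_dualPolytope, dotProduct_comm p]

lemma isLP_of_mem_facetNormals (hK : HasLatticePolar K) (hu : u ∈ facetNormals K) : IsLP u :=
  hK.isLatticePolytope_dualPolytope.isLP_of_mem_extremePoints hu

lemma exists_int_dotProduct_le_one (hK : HasLatticePolar K) (hu : u ∈ facetNormals K)
    (hp : p ∈ K) (hpl : IsLP p) : ∃ n : ℤ, u ⬝ᵥ p = n ∧ n ≤ 1 := by
  obtain ⟨n, hn⟩ := (hK.isLP_of_mem_facetNormals hu).exists_int_dotProduct hpl
  have hle := hK.mem_iff.1 hp u hu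
  rw [hn] at hle
  exact ⟨n, hn, by exact_mod_cast hle⟩

lemma dotProduct_eq_one_of_pos (hK : HasLatticePolar K) (hu : u ∈ facetNormals K)
    (hp : p ∈ K) (hpl : IsLP p) (hpos : 0 < u ⬝ᵥ p) : u ⬝ᵥ p = 1 := by
  obtain ⟨n, hn, hn1⟩ := hK.exists_int_dotProduct_le_one hu hp hpl
  rw [hn] at hpos ⊢
  have : 0 < n := by exact_mod_cast hpos
  exact_mod_cast (by lia : n = 1)

lemma dotProduct_nonpos_of_ne_one (hK : HasLatticePolar K) (hu : u ∈ facetNormals K)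
    (hp : p ∈ K) (hpl : IsLP p) (hne : u ⬝ᵥ p ≠ 1) : u ⬝ᵥ p ≤ 0 :=
  not_lt.1 fun hpos => hne (hK.dotProduct_eq_one_of_pos hu hp hpl hpos)

lemma exists_dotProduct_eq_one (hK : HasLatticePolar K) (hp : p ∈ K) (hpl : IsLP p)
    (h0 : p ≠ 0) : ∃ u ∈ facetNormals K, u ⬝ᵥ p = 1 := by
  by_contra! h
  refine h0 (eq_zero_of_forall_add_natCast_smul_mem (p := 0) hK.isCompact.isBounded fun n => ?_)
  refine hK.mem_iff.2 fun u hu => ?_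
  have hle := hK.dotProduct_nonpos_of_ne_one hu hp hpl (h u hu)
  rw [zero_add, dotProduct_smul, smul_eq_mul]
  exact (mul_nonpos_of_nonneg_of_nonpos n.cast_nonneg hle).trans zero_le_one

lemma add_mem_of_not_facetAdj (hK : HasLatticePolar K) (hp : p ∈ K) (hpl : IsLP p)
    (hq : q ∈ K) (hql : IsLP q) (h : ¬ FacetAdj K p q) : p + q ∈ K := by
  refine hK.mem_iff.2 fun u hu => ?_
  rw [dotProduct_add]
  have hup := hK.mem_iff.1 hp u hu
  have huq := hK.mem_iff.1 hq u hu
  by_cases h1 : u ⬝ᵥ p = 1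
  · linarith [hK.dotProduct_nonpos_of_ne_one hu hq hql fun h2 => h ⟨u, hu, h1, h2⟩]
  · linarith [hK.dotProduct_nonpos_of_ne_one hu hp hpl h1]

lemma linearIndependent_pair (hK : HasLatticePolar K) (hp : p ∈ K) (hpl : IsLP p)
    (hq : q ∈ K) (hql : IsLP q) (hp0 : p ≠ 0) (hq0 : q ≠ 0) (hne : p ≠ q) (hadd : p + q ≠ 0) :
    LinearIndependent ℝ ![p, q] := by
  rw [LinearIndependent.pair_iff' hp0]
  rintro a rfl
  obtain ⟨u, hu, hup⟩ := hK.exists_dotProduct_eq_one hp hpl hp0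
  obtain ⟨g, hg, hgq⟩ := hK.exists_dotProduct_eq_one hq hql hq0
  obtain ⟨m, hm, -⟩ := hK.exists_int_dotProduct_le_one hu hq hql
  obtain ⟨n, hn, -⟩ := hK.exists_int_dotProduct_le_one hg hp hpl
  rw [dotProduct_smul, hup, smul_eq_mul, mul_one] at hm
  rw [dotProduct_smul, hn, smul_eq_mul, hm] at hgq
  have hmn : m * n = 1 := by exact_mod_cast hgq
  rcases Int.eq_one_or_neg_one_of_mul_eq_one hmn with rfl | rfl
  · exact hne (by simp [hm])
  · exact hadd (by simp [hm])

lemma dualPolytope_preimage {m : ℕ} (hK : HasLatticePolar K)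
    (φ : (Fin m → ℝ) →ₗ[ℝ] (Fin d → ℝ)) :
    dualPolytope (φ ⁻¹' K) = (LinearMap.toMatrix' φ).vecMulLinear '' dualPolytope K := by
  have hD := hK.isLatticePolytope_dualPolytope
  set T := (LinearMap.toMatrix' φ).vecMulLinear
  have hT (u : Fin d → ℝ) (y : Fin m → ℝ) : T u ⬝ᵥ y = u ⬝ᵥ φ y := by
    rw [Matrix.vecMulLinear_apply, ← Matrix.dotProduct_mulVec, LinearMap.toMatrix'_mulVec]
  have hdual : dualPolytope (T '' dualPolytope K) = φ ⁻¹' K := by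
    ext y
    calc y ∈ dualPolytope (T '' dualPolytope K) ↔ φ y ∈ dualPolytope (dualPolytope K) := by
          simp only [mem_dualPolytope (K := T '' _), mem_dualPolytope (K := dualPolytope K),
            forall_mem_image, dotProduct_comm y, dotProduct_comm (φ y), hT]
      _ ↔ y ∈ φ ⁻¹' K := by rw [hK.dualPolytope_dualPolytope, mem_preimage]
  rw [← hdual, dualPolytope_dualPolytope (hD.convex.linear_image T)
    (hD.isCompact.image T.continuous_of_finiteDimensional).isClosed
    ⟨0, zero_mem_dualPolytope, map_zero T⟩]

lemma preimage {m : ℕ} (hK : HasLatticePolar K) {φ : (Fin m → ℝ) →ₗ[ℝ] (Fin d → ℝ)}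
    (hφ : Function.Injective φ) (hl : ∀ x, IsLP x → IsLP (φ x)) : HasLatticePolar (φ ⁻¹' K) where
  isCompact := (LinearMap.isClosedEmbedding_of_injective
    (LinearMap.ker_eq_bot.2 hφ)).isCompact_preimage hK.isCompact
  convex := hK.convex.linear_preimage φ
  zero_mem_interior := preimage_interior_subset_interior_preimage
    φ.continuous_of_finiteDimensional (by simpa using hK.zero_mem_interior)
  isLatticePolytope_dualPolytope := by
    rw [hK.dualPolytope_preimage φ]
    refine hK.isLatticePolytope_dualPolytope.image _ fun u hu i => ?_
    simpa [Matrix.vecMul, Matrix.col_apply', LinearMap.toMatrix'_apply] using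
      hu.exists_int_dotProduct (hl _ (isLP_single_one i))

end HasLatticePolar

section Sectors

variable {d : ℕ} {K : Set (Fin d → ℝ)} {u p q : Fin d → ℝ} {s t : ℝ}

lemma smul_add_smul_mem_of_zero_mem {E : Type*} [AddCommGroup E] [Module ℝ E] {C : Set E}
    (hC : Convex ℝ C) (h0 : 0 ∈ C) {y z : E} (hy : y ∈ C) (hz : z ∈ C) {a b : ℝ} (ha : 0 ≤ a)
    (hb : 0 ≤ b) (hab : a + b ≤ 1) : a • y + b • z ∈ C := by
  have := hC.sum_mem (t := Finset.univ) (w := ![1 - a - b, a, b]) (z := ![0, y, z])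
    (by simpa [Fin.forall_fin_succ, ha, hb, sub_sub] using hab)
    (by simp [Fin.sum_univ_three, sub_sub, add_assoc])
    (by simp [Fin.forall_fin_succ, h0, hy, hz])
  simpa [Fin.sum_univ_three] using this

namespace HasLatticePolar

lemma smul_add_smul_mem_of_facetAdj (hK : HasLatticePolar K) {C : Set (Fin d → ℝ)}
    (hC : Convex ℝ C) (h0 : 0 ∈ C) (hp : p ∈ C) (hq : q ∈ C) (hpq : FacetAdj K p q)
    (hs : 0 ≤ s) (ht : 0 ≤ t) (h : s • p + t • q ∈ K) : s • p + t • q ∈ C := by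
  obtain ⟨u, hu, hup, huq⟩ := hpq
  refine smul_add_smul_mem_of_zero_mem hC h0 hp hq hs ht ?_
  simpa [dotProduct_add, hup, huq] using hK.mem_iff.1 h u hu

lemma exists_facetAdj_add_natCast_smul (hK : HasLatticePolar K) (hp : p ∈ K) (hpl : IsLP p)
    (hq : q ∈ K) (hql : IsLP q) (hq0 : q ≠ 0) :
    ∃ n : ℕ, p + (n : ℝ) • q ∈ K ∧ FacetAdj K (p + (n : ℝ) • q) q := by
  by_contra! h
  refine hq0 (eq_zero_of_forall_add_natCast_smul_mem (p := p) hK.isCompact.isBounded fun n => ?_)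
  induction n with
  | zero => simpa using hp
  | succ n ih =>
    have := hK.add_mem_of_not_facetAdj ih (hpl.add (hql.natCast_smul n)) hq hql (h n ih)
    rwa [add_assoc, Nat.cast_smul_eq_nsmul, ← succ_nsmul, ← Nat.cast_smul_eq_nsmul ℝ] at this

lemma zero_mem_integerHull (hK : HasLatticePolar K) : 0 ∈ integerHull K :=
  mem_integerHull hK.zero_mem fun _ => ⟨0, by simp⟩

-- The lattice point `r = p + n • q` is adjacent to both `p` and `q`, so the cone spanned by `p`
-- and `q` splits into two cones over edges.
lemma mem_integerHull_of_dotProduct_eq_zero (hK : HasLatticePolar K) (hp : p ∈ K) (hpl : IsLP p)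
    (hq : q ∈ K) (hql : IsLP q) (hq0 : q ≠ 0) (hu : u ∈ facetNormals K) (hup : u ⬝ᵥ p = 1)
    (huq : u ⬝ᵥ q = 0) (hs : 0 ≤ s) (ht : 0 ≤ t) (h : s • p + t • q ∈ K) :
    s • p + t • q ∈ integerHull K := by
  obtain ⟨n, hr, hrq⟩ := hK.exists_facetAdj_add_natCast_smul hp hpl hq hql hq0
  set r := p + (n : ℝ) • q with hr_def
  have hpr : FacetAdj K p r := ⟨u, hu, hup, by simp [hr_def, dotProduct_add, hup, huq]⟩
  have hconv : Convex ℝ (integerHull K) := convex_convexHull ℝ _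
  have h0 := hK.zero_mem_integerHull
  have hp' := mem_integerHull hp hpl
  have hq' := mem_integerHull hq hql
  have hr' := mem_integerHull hr (hpl.add (hql.natCast_smul n))
  rcases le_total (s * n) t with hst | hst
  · have hsplit : s • p + t • q = s • r + (t - s * n) • q := by rw [hr_def]; module
    rw [hsplit] at h ⊢
    exact hK.smul_add_smul_mem_of_facetAdj hconv h0 hr' hq' hrq hs (sub_nonneg.2 hst) h
  · rcases n.eq_zero_or_pos with rfl | hn
    · have : r = p := by simp [hr_def]
      exact hK.smul_add_smul_mem_of_facetAdj hconv h0 hp' hq' (this ▸ hrq) hs ht h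
    · have hn' : (0 : ℝ) < n := Nat.cast_pos.2 hn
      have hsplit : s • p + t • q = (s - t / n) • p + (t / n) • r := by
        rw [hr_def, smul_add, smul_smul, div_mul_cancel₀ _ hn'.ne']; module
      rw [hsplit] at h ⊢
      exact hK.smul_add_smul_mem_of_facetAdj hconv h0 hp' hr' hpr
        (sub_nonneg.2 ((div_le_iff₀ hn').2 hst)) (div_nonneg ht hn'.le) h

lemma smul_add_smul_mem_integerHull (hK : HasLatticePolar K) (hp : p ∈ K) (hpl : IsLP p)
    (hq : q ∈ K) (hql : IsLP q) (hp0 : p ≠ 0) (hq0 : q ≠ 0) (hadd : p + q ≠ 0)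
    (hs : 0 ≤ s) (ht : 0 ≤ t) (h : s • p + t • q ∈ K) : s • p + t • q ∈ integerHull K := by
  by_cases hpq : FacetAdj K p q
  · exact hK.smul_add_smul_mem_of_facetAdj (convex_convexHull ℝ _)
      hK.zero_mem_integerHull (mem_integerHull hp hpl) (mem_integerHull hq hql) hpq hs ht h
  obtain ⟨u, hu, hsum⟩ := hK.exists_dotProduct_eq_one
    (hK.add_mem_of_not_facetAdj hp hpl hq hql hpq) (hpl.add hql) hadd
  rw [dotProduct_add] at hsum
  by_cases hup : u ⬝ᵥ p = 1
  · exact hK.mem_integerHull_of_dotProduct_eq_zero hp hpl hq hql hq0 hu hup (by linarith) hs ht h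
  · have huq : u ⬝ᵥ q = 1 := hK.dotProduct_eq_one_of_pos hu hq hql
      (by linarith [hK.dotProduct_nonpos_of_ne_one hu hp hpl hup])
    rw [add_comm] at h ⊢
    exact hK.mem_integerHull_of_dotProduct_eq_zero hq hql hp hpl hp0 hu huq (by linarith) ht hs h

end HasLatticePolar

end Sectors

section PlaneGeometry

variable {E : Type*} [NormedAddCommGroup E] [NormedSpace ℝ E] {K : Set E} {a b b' p q x : E}
  {c s t : ℝ}

lemma exists_mem_extremePoints_le (hK : IsCompact K) (l : StrongDual ℝ E) (hx : x ∈ K) :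
    ∃ g ∈ K.extremePoints ℝ, l x ≤ l g := by
  have hexp : IsExposed ℝ K (l.toExposed K) := ContinuousLinearMap.toExposed.isExposed
  obtain ⟨z, hz, hmax⟩ := hK.exists_isMaxOn ⟨x, hx⟩ l.continuous.continuousOn
  obtain ⟨g, hg⟩ := (hexp.isCompact hK).extremePoints_nonempty ⟨z, hz, hmax⟩
  exact ⟨g, hexp.isExtreme.extremePoints_subset_extremePoints hg, hg.1.2 x hx⟩

lemma pos_of_smul_add_smul_mem (hK : Convex ℝ K) (h0 : 0 ∈ K) (hp : p ∈ K)
    (hq : q ∈ K.extremePoints ℝ) (hq0 : q ≠ 0) (h : s • p + t • q ∈ K) (hst : 2 ≤ s + t) :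
    0 < s := by
  by_contra! hs
  have h1s : 0 < 1 - s := by linarith
  have hmem : (t / (1 - s)) • q ∈ K := by
    have := smul_add_smul_mem_of_zero_mem hK h0 h hp (inv_nonneg.2 h1s.le)
      (div_nonneg (neg_nonneg.2 hs) h1s.le) (by field_simp; linarith)
    convert this using 1
    module
  have hlt : 1 < t / (1 - s) := (one_lt_div h1s).2 (by linarith)
  refine hq0 (hq.2 h0 hmem ?_).symm
  rw [openSegment_eq_image']
  have hpos : 0 < t / (1 - s) := one_pos.trans hlt
  refine ⟨(t / (1 - s))⁻¹, ⟨inv_pos.2 hpos, inv_lt_one_of_one_lt₀ hlt⟩, ?_⟩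
  simp only [zero_add, sub_zero, smul_smul, inv_mul_cancel₀ hpos.ne', one_smul]

lemma exists_mem_extremePoints_eq_pos_smul_add_pos_smul (hE : finrank ℝ E = 2)
    (hKc : IsCompact K) (hK : Convex ℝ K) (h0 : 0 ∈ K) (hp : p ∈ K.extremePoints ℝ)
    (hq : q ∈ K.extremePoints ℝ) (hli : LinearIndependent ℝ ![p, q]) (hpq : p + q ∈ K) :
    ∃ r ∈ K.extremePoints ℝ, ∃ s t : ℝ, 0 < s ∧ 0 < t ∧ r = s • p + t • q := by
  have : FiniteDimensional ℝ E := .of_finrank_pos (by lia)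
  let B := basisOfLinearIndependentOfCardEqFinrank hli (by simp [hE])
  have hBp : B 0 = p := by simp [B]
  have hBq : B 1 = q := by simp [B]
  let l : StrongDual ℝ E := (B.coord 0 + B.coord 1).toContinuousLinearMap
  obtain ⟨r, hr, hle⟩ := exists_mem_extremePoints_le hKc l hpq
  have hsum : 2 ≤ B.coord 0 r + B.coord 1 r := by
    calc (2 : ℝ) = l (p + q) := by norm_num [l, ← hBp, ← hBq]
      _ ≤ l r := hle
  have hr_eq : r = B.coord 0 r • p + B.coord 1 r • q := by
    rw [← hBp, ← hBq]
    exact (B.sum_repr r).symm.trans (Fin.sum_univ_two _)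
  have hr_mem := hr_eq ▸ hr.1
  refine ⟨r, hr, _, _, ?_, ?_, hr_eq⟩
  · exact pos_of_smul_add_smul_mem hK h0 hp.1 hq (hli.ne_zero 1) hr_mem hsum
  · rw [add_comm] at hr_mem hsum
    exact pos_of_smul_add_smul_mem hK h0 hq.1 hp (hli.ne_zero 0) hr_mem hsum

lemma five_le_ncard_extremePoints (hE : finrank ℝ E = 2) (hKc : IsCompact K) (hK : Convex ℝ K)
    (h0 : 0 ∈ K) (hfin : (K.extremePoints ℝ).Finite) (ha : a ∈ K.extremePoints ℝ)
    (hb : b ∈ K.extremePoints ℝ) (hb' : b' ∈ K.extremePoints ℝ)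
    (hli : LinearIndependent ℝ ![a, b]) (hab : a + b ∈ K) (hab' : a + b' ∈ K)
    (hrel : b + b' = -(c • a)) : 5 ≤ (K.extremePoints ℝ).ncard := by
  obtain rfl : b' = -(c • a) - b := eq_sub_of_add_eq' hrel
  have hcomb (s t : ℝ) : s • a + t • (-(c • a) - b) = (s - c * t) • a + (-t) • b := by module
  have hli' : LinearIndependent ℝ ![a, -(c • a) - b] := by
    rw [LinearIndependent.pair_iff] at hli ⊢
    intro s t hst
    obtain ⟨h1, h2⟩ := hli _ _ ((hcomb s t).symm.trans hst)
    obtain rfl : t = 0 := neg_eq_zero.1 h2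
    exact ⟨by linarith, rfl⟩
  obtain ⟨r, hr, s, t, hs, ht, rfl⟩ :=
    exists_mem_extremePoints_eq_pos_smul_add_pos_smul hE hKc hK h0 ha hb hli hab
  obtain ⟨r', hr', s', t', hs', ht', rfl⟩ :=
    exists_mem_extremePoints_eq_pos_smul_add_pos_smul hE hKc hK h0 ha hb' hli' hab'
  have hinj : Function.Injective fun z : ℝ × ℝ => z.1 • a + z.2 • b := fun y z hyz =>
    Prod.ext_iff.2 (hli.eq_of_pair hyz)
  let f : Fin 5 → ℝ × ℝ := ![(1, 0), (0, 1), (-c, -1), (s, t), (s' - c * t', -t')]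
  have hf : Function.Injective f := by
    rw [← List.nodup_ofFn]
    simp only [f, List.ofFn_succ, List.ofFn_zero, List.nodup_cons, List.mem_cons, Prod.mk.injEq,
      Matrix.cons_val_zero, Matrix.cons_val_succ, List.not_mem_nil, or_false]
    grind
  rw [← Fintype.card_fin 5, ← Nat.card_eq_fintype_card, ← ncard_range_of_injective (hinj.comp hf)]
  refine ncard_le_ncard (range_subset_iff.2 fun i => ?_) hfin
  rw [hcomb, neg_smul, ← sub_eq_add_neg] at hr'
  fin_cases i <;> simpa [f, ← sub_eq_add_neg]

end PlaneGeometry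

section LatticePolygons

lemma exists_nonneg_smul_add_smul_of_add_eq_neg_smul {E : Type*} [AddCommGroup E] [Module ℝ E]
    {a b b' : E} {c : ℝ} (hc : 0 < c) (hrel : b + b' = -(c • a)) (s t : ℝ) :
    ∃ m n : ℝ, 0 ≤ m ∧ 0 ≤ n ∧ (s • a + t • b = m • a + n • b ∨
      s • a + t • b = m • a + n • b' ∨ s • a + t • b = m • b + n • b') := by
  obtain rfl : b' = -(c • a) - b := eq_sub_of_add_eq' hrel
  by_cases hab : 0 ≤ s ∧ 0 ≤ t
  · exact ⟨s, t, hab.1, hab.2, .inl rfl⟩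
  by_cases hab' : t ≤ 0 ∧ 0 ≤ s - c * t
  · exact ⟨s - c * t, -t, hab'.2, neg_nonneg.2 hab'.1, .inr (.inl (by module))⟩
  have hsc : s = c * (s / c) := (mul_div_cancel₀ s hc.ne').symm
  have hs : s / c ≤ 0 ∧ s / c ≤ t := by
    rw [div_le_iff₀ hc, div_le_iff₀ hc]
    constructor <;> by_contra! <;> rcases le_total t 0 with ht | ht <;>
      simp only [ht, true_and, not_le, and_true] at hab hab' <;> nlinarith
  refine ⟨t - s / c, -(s / c), by linarith, by linarith, .inr (.inr ?_)⟩
  nth_rw 1 [hsc]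
  module

namespace HasLatticePolar

variable {d : ℕ} {K : Set (Fin d → ℝ)} {a b b' x : Fin d → ℝ} {c : ℝ}

lemma mem_integerHull_of_mem_span_pair (hK : HasLatticePolar K) (ha : a ∈ K) (hal : IsLP a)
    (hb : b ∈ K) (hbl : IsLP b) (hb' : b' ∈ K) (hbl' : IsLP b') (ha0 : a ≠ 0) (hb0 : b ≠ 0)
    (hb0' : b' ≠ 0) (hab : a + b ≠ 0) (hab' : a + b' ≠ 0) (hc : 0 < c)
    (hrel : b + b' = -(c • a)) (hx : x ∈ K) (hspan : x ∈ Submodule.span ℝ {a, b}) :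
    x ∈ integerHull K := by
  obtain ⟨s, t, rfl⟩ := Submodule.mem_span_pair.1 hspan
  have hbb' : b + b' ≠ 0 := by rw [hrel]; exact neg_ne_zero.2 (smul_ne_zero hc.ne' ha0)
  obtain ⟨m, n, hm, hn, h | h | h⟩ := exists_nonneg_smul_add_smul_of_add_eq_neg_smul hc hrel s t <;>
    rw [h] at hx ⊢
  · exact hK.smul_add_smul_mem_integerHull ha hal hb hbl ha0 hb0 hab hm hn hx
  · exact hK.smul_add_smul_mem_integerHull ha hal hb' hbl' ha0 hb0' hab' hm hn hx
  · exact hK.smul_add_smul_mem_integerHull hb hbl hb' hbl' hb0 hb0' hbb' hm hn hx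

end HasLatticePolar

lemma ne_zero_of_mem_extremePoints {E : Type*} [NormedAddCommGroup E] [NormedSpace ℝ E]
    [Nontrivial E] {K : Set E} {x : E} (h0 : 0 ∈ interior K) (hx : x ∈ K.extremePoints ℝ) :
    x ≠ 0 := fun h => disjoint_left.1 (disjoint_interior_extremePoints K) (h ▸ h0) hx

lemma mem_extremePoints_preimage {E F : Type*} [AddCommGroup E] [Module ℝ E] [AddCommGroup F]
    [Module ℝ F] {φ : E →ₗ[ℝ] F} (hφ : Function.Injective φ) {K : Set F} {x : E}
    (hx : φ x ∈ K.extremePoints ℝ) : x ∈ (φ ⁻¹' K).extremePoints ℝ := by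
  refine ⟨hx.1, fun y hy z hz hxyz => hφ (hx.2 hy hz ?_)⟩
  exact image_openSegment ℝ φ.toAffineMap y z ▸ mem_image_of_mem φ hxyz

-- The cones spanned by two of `a`, `b`, `b'` cover the plane because `b + b' = -c • a`; each meets
-- `Q` in lattice polygons, and the pairs `(a, b)`, `(a, b')` are separated by further vertices.
lemma isReflexive_and_five_le_ncard_extremePoints {Q : Set (Fin 2 → ℝ)} {a b b' : Fin 2 → ℝ}
    {c : ℝ} (hQ : HasLatticePolar Q) (ha : a ∈ Q.extremePoints ℝ) (hal : IsLP a)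
    (hb : b ∈ Q.extremePoints ℝ) (hbl : IsLP b) (hb' : b' ∈ Q.extremePoints ℝ) (hbl' : IsLP b')
    (hne : a ≠ b) (hab : a + b ≠ 0) (hab' : a + b' ≠ 0) (habQ : a + b ∈ Q) (habQ' : a + b' ∈ Q)
    (hc : 0 < c) (hrel : b + b' = -(c • a)) : IsReflexive Q ∧ 5 ≤ (Q.extremePoints ℝ).ncard := by
  have ha0 := ne_zero_of_mem_extremePoints hQ.zero_mem_interior ha
  have hb0 := ne_zero_of_mem_extremePoints hQ.zero_mem_interior hb
  have hb0' := ne_zero_of_mem_extremePoints hQ.zero_mem_interior hb'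
  have hli := hQ.linearIndependent_pair ha.1 hal hb.1 hbl ha0 hb0 hne hab
  have hspan : Submodule.span ℝ {a, b} = ⊤ := by
    rw [pair_comm]
    simpa using hli.span_eq_top_of_card_eq_finrank (by simp)
  have hlat : IsLatticePolytope Q :=
    isLatticePolytope_of_subset_integerHull hQ.isCompact.isBounded hQ.convex fun x hx =>
      hQ.mem_integerHull_of_mem_span_pair ha.1 hal hb.1 hbl hb'.1 hbl' ha0 hb0 hb0' hab hab' hc hrel
        hx (hspan ▸ Submodule.mem_top)
  exact ⟨⟨hlat, hQ.zero_mem_interior, hQ.isLatticePolytope_dualPolytope⟩,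
    five_le_ncard_extremePoints (by simp) hQ.isCompact hQ.convex hQ.zero_mem
      hlat.finite_extremePoints ha hb hb' hli habQ habQ' hrel⟩

end LatticePolygons

section Facets

variable {d : ℕ} {P : Set (Fin d → ℝ)} {u p : Fin d → ℝ}

/-- The vertices of the facet of `P` with normal `u`. -/
def facetVertices (P : Set (Fin d → ℝ)) (u : Fin d → ℝ) : Set (Fin d → ℝ) :=
  {x ∈ P.extremePoints ℝ | u ⬝ᵥ x = 1}

lemma exists_pos_add_smul_mem_dualPolytope (hP : IsLatticePolytope P) (hu : u ∈ dualPolytope P)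
    {e : Fin d → ℝ} (he : ∀ x ∈ facetVertices P u, e ⬝ᵥ x ≤ 0) :
    ∃ ε : ℝ, 0 < ε ∧ u + ε • e ∈ dualPolytope P := by
  have key : ∀ᶠ ε : ℝ in 𝓝[>] 0, ∀ x ∈ P.extremePoints ℝ, (u + ε • e) ⬝ᵥ x ≤ 1 := by
    rw [Filter.eventually_all_finite hP.finite_extremePoints]
    intro x hx
    simp only [add_dotProduct, smul_dotProduct, smul_eq_mul]
    have hux : u ⬝ᵥ x ≤ 1 := hu x hx.1
    rcases hux.eq_or_lt with h | h
    · filter_upwards [self_mem_nhdsWithin] with ε hε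
      exact (add_le_of_nonpos_right (mul_nonpos_of_nonneg_of_nonpos (le_of_lt hε)
        (he x ⟨hx, h⟩))).trans h.le
    · have hcont : Continuous fun ε : ℝ => u ⬝ᵥ x + ε * e ⬝ᵥ x := by fun_prop
      refine nhdsWithin_le_nhds ((hcont.tendsto 0).eventually_le_const ?_)
      simpa using h
  obtain ⟨ε, h, hε⟩ := (key.and self_mem_nhdsWithin).exists
  refine ⟨ε, hε, ?_⟩
  rwa [← hP.convexHull_extremePoints, dualPolytope_convexHull]

lemma span_facetVertices (hP : IsLatticePolytope P) (hu : u ∈ facetNormals P) :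
    Submodule.span ℝ (facetVertices P u) = ⊤ := by
  by_contra h
  obtain ⟨f, hf, hker⟩ := Submodule.exists_le_ker_of_lt_top _ (lt_top_iff_ne_top.2 h)
  obtain ⟨e, rfl⟩ := (dotProductEquiv ℝ (Fin d)).surjective f
  have he (x) (hx : x ∈ facetVertices P u) : e ⬝ᵥ x = 0 := hker (Submodule.subset_span hx)
  obtain ⟨ε, hε, h1⟩ := exists_pos_add_smul_mem_dualPolytope hP hu.1 fun x hx => (he x hx).le
  obtain ⟨δ, hδ, h2⟩ := exists_pos_add_smul_mem_dualPolytope hP hu.1 (e := -e) fun x hx => by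
    rw [neg_dotProduct, he x hx, neg_zero]
  have hseg : u ∈ openSegment ℝ (u + ε • e) (u + δ • -e) := by
    refine ⟨δ / (ε + δ), ε / (ε + δ), by positivity, by positivity, by field_simp; ring, ?_⟩
    match_scalars <;> field_simp <;> ring
  have he0 : e = 0 := by simpa [hε.ne'] using hu.2 h1 h2 hseg
  exact hf (by rw [he0, map_zero])

lemma isFacet_of_mem_facetNormals [NeZero d] (hP : IsLatticePolytope P)
    (hu : u ∈ facetNormals P) : IsFacet P {y ∈ P | u ⬝ᵥ y = 1} := by
  have hspan := span_facetVertices hP hu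
  obtain ⟨x, hx⟩ : (facetVertices P u).Nonempty := by
    by_contra! h
    rw [h, Submodule.span_empty] at hspan
    exact bot_ne_top hspan
  set F := {y ∈ P | u ⬝ᵥ y = 1}
  have hxF : x ∈ F := ⟨hx.1.1, hx.2⟩
  refine ⟨u, ⟨x, hxF⟩, hu.1, rfl, ?_⟩
  have hle : vectorSpan ℝ F ≤ LinearMap.ker (dotProductEquiv ℝ (Fin d) u) := by
    rw [vectorSpan_def, Submodule.span_le]
    rintro _ ⟨a, ha, b, hb, rfl⟩
    simp [dotProduct_sub, ha.2, hb.2]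
  have hsup : vectorSpan ℝ F ⊔ ℝ ∙ x = ⊤ := by
    rw [← top_le_iff, ← hspan, Submodule.span_le]
    intro y hy
    rw [← sub_add_cancel y x]
    exact Submodule.add_mem_sup (vsub_mem_vectorSpan ℝ (show y ∈ F from ⟨hy.1.1, hy.2⟩) hxF)
      (Submodule.mem_span_singleton_self x)
  have hu0 : dotProductEquiv ℝ (Fin d) u ≠ 0 := fun h => by
    simpa [hx.2] using LinearMap.congr_fun h x
  have hker := Module.Dual.finrank_ker_add_one_of_ne_zero hu0
  have hmono := Submodule.finrank_mono hle
  have hadd := Submodule.finrank_add_le_finrank_add_finrank (vectorSpan ℝ F) (ℝ ∙ x)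
  have hline : finrank ℝ (ℝ ∙ x) ≤ 1 := by simpa using finrank_span_le_card ({x} : Set (Fin d → ℝ))
  rw [hsup, finrank_top] at hadd
  simp only [Module.finrank_fin_fun] at hker hadd
  lia

lemma FacetAdj.exists_isFacet {q : Fin d → ℝ} (h : FacetAdj P p q) (hP : IsLatticePolytope P)
    (hp : p ∈ P) (hq : q ∈ P) : ∃ F, IsFacet P F ∧ p ∈ F ∧ q ∈ F := by
  obtain ⟨u, hu, hup, huq⟩ := h
  rcases eq_zero_or_neZero d with rfl | hd
  · simp at hup
  · exact ⟨_, isFacet_of_mem_facetNormals hP hu, ⟨hp, hup⟩, ⟨hq, huq⟩⟩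

namespace IsReflexive

lemma extremePoints_setOf_dotProduct_eq_one (hP : IsReflexive P) (hu : u ∈ dualPolytope P) :
    {y ∈ P | u ⬝ᵥ y = 1}.extremePoints ℝ = facetVertices P u := by
  have hext := isExtreme_setOf_dotProduct_eq_one (K := dualPolytope P) (singleton_subset_iff.2 hu)
  simp only [hP.hasLatticePolar.dualPolytope_dualPolytope, mem_singleton_iff, forall_eq,
    dotProduct_comm _ u] at hext
  rw [hext.extremePoints_eq]
  ext x
  exact ⟨fun h => ⟨h.2, h.1.2⟩, fun h => ⟨⟨h.1.1, h.2⟩, h.1⟩⟩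

lemma ncard_facetVertices (hP : IsReflexive P) (hs : IsSimplicial P) (hu : u ∈ facetNormals P) :
    (facetVertices P u).ncard = d := by
  rcases eq_zero_or_neZero d with rfl | hd
  · simp [facetVertices]
  · rw [← hP.extremePoints_setOf_dotProduct_eq_one hu.1]
    exact hs _ (isFacet_of_mem_facetNormals hP.1 hu)

lemma finite_facetVertices (hP : IsReflexive P) : (facetVertices P u).Finite :=
  hP.1.finite_extremePoints.subset fun _ hx => hx.1

lemma linearIndependent_facetVertices (hP : IsReflexive P) (hs : IsSimplicial P)
    (hu : u ∈ facetNormals P) : LinearIndependent ℝ ((↑) : facetVertices P u → Fin d → ℝ) := by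
  have := hP.finite_facetVertices (u := u).fintype
  refine linearIndependent_of_top_le_span_of_card_eq_finrank ?_ ?_
  · rw [Subtype.range_coe, span_facetVertices hP.1 hu]
  · rw [Module.finrank_fin_fun, ← Nat.card_eq_fintype_card, Nat.card_coe_set_eq,
      hP.ncard_facetVertices hs hu]

/-- The basis of `ℝ^d` formed by the vertices of a facet of a simplicial polytope. -/
def facetBasis (hP : IsReflexive P) (hs : IsSimplicial P) (hu : u ∈ facetNormals P) :
    Basis (facetVertices P u) ℝ (Fin d → ℝ) :=
  Basis.mk (hP.linearIndependent_facetVertices hs hu) <| by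
    rw [Subtype.range_coe, span_facetVertices hP.1 hu]

lemma facetBasis_apply (hP : IsReflexive P) (hs : IsSimplicial P) (hu : u ∈ facetNormals P)
    (x : facetVertices P u) : hP.facetBasis hs hu x = x :=
  Basis.mk_apply _ _ x

lemma facetBasis_repr_coe (hP : IsReflexive P) (hs : IsSimplicial P) (hu : u ∈ facetNormals P)
    (x : facetVertices P u) : (hP.facetBasis hs hu).repr x = Finsupp.single x 1 := by
  rw [← hP.facetBasis_apply hs hu, Basis.repr_self]

lemma eq_zero_of_facetBasis_repr_nonneg (hP : IsReflexive P) (hs : IsSimplicial P)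
    (hu : u ∈ facetNormals P) (hp : ∀ x, 0 ≤ (hP.facetBasis hs hu).repr p x) (hup : u ⬝ᵥ p = 0) :
    p = 0 := by
  have := hP.finite_facetVertices (u := u).fintype
  set B := hP.facetBasis hs hu with hB
  have hx (x : facetVertices P u) : u ⬝ᵥ (x : Fin d → ℝ) = 1 := x.2.2
  have hsum : ∑ x, B.repr p x = 0 := by
    calc ∑ x, B.repr p x = u ⬝ᵥ ∑ x, B.repr p x • B x := by
          simp only [dotProduct_sum, dotProduct_smul, hB, hP.facetBasis_apply, hx, smul_eq_mul,
            mul_one]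
      _ = 0 := by rw [B.sum_repr, hup]
  rw [← B.sum_repr p]
  refine Finset.sum_eq_zero fun x hx => ?_
  rw [(Finset.sum_eq_zero_iff_of_nonneg fun x _ => hp x).1 hsum x hx, zero_smul]

end IsReflexive

end Facets

section Neighbors

variable {d : ℕ} {P : Set (Fin d → ℝ)} {u v w x g p : Fin d → ℝ}

/-- The facet with normal `g` is a neighbor of the facet with normal `u` across the vertex `x`: it
contains all the other vertices of that facet, but not `x`. Since `⟨g, x⟩` is an integer, the
second condition is stated as `⟨g, x⟩ ≤ 0`. -/
structure IsNeighbor (P : Set (Fin d → ℝ)) (u x g : Fin d → ℝ) : Prop where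
  mem_facetNormals : g ∈ facetNormals P
  dotProduct_eq_one : ∀ y ∈ facetVertices P u, y ≠ x → g ⬝ᵥ y = 1
  dotProduct_nonpos : g ⬝ᵥ x ≤ 0

namespace IsReflexive

lemma dotProduct_eq_sub_facetBasis_repr_mul (hP : IsReflexive P) (hs : IsSimplicial P)
    (hu : u ∈ facetNormals P) (hg : IsNeighbor P u x g) (hx : x ∈ facetVertices P u)
    (p : Fin d → ℝ) :
    g ⬝ᵥ p = u ⬝ᵥ p - (hP.facetBasis hs hu).repr p ⟨x, hx⟩ * (1 - g ⬝ᵥ x) := by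
  set B := hP.facetBasis hs hu with hB
  suffices dotProductEquiv ℝ (Fin d) g =
      dotProductEquiv ℝ (Fin d) u - (1 - g ⬝ᵥ x) • B.coord ⟨x, hx⟩ by
    simpa [mul_comm] using LinearMap.congr_fun this p
  refine B.ext fun y => ?_
  have huy : u ⬝ᵥ (y : Fin d → ℝ) = 1 := y.2.2
  by_cases hyx : y = ⟨x, hx⟩
  · subst hyx
    simp [hB, hP.facetBasis_apply, hP.facetBasis_repr_coe hs hu ⟨x, hx⟩, huy]
  · have hgy : g ⬝ᵥ (y : Fin d → ℝ) = 1 :=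
      hg.dotProduct_eq_one y y.2 fun h => hyx (Subtype.ext h)
    simp [hB, hP.facetBasis_apply, hP.facetBasis_repr_coe, huy, hgy, hyx]

lemma dotProduct_eq_one_of_facetBasis_repr_neg (hP : IsReflexive P) (hs : IsSimplicial P)
    (hu : u ∈ facetNormals P) (hg : IsNeighbor P u x g) (hx : x ∈ facetVertices P u)
    (hp : p ∈ P) (hpl : IsLP p) (hup : 0 ≤ u ⬝ᵥ p)
    (hneg : (hP.facetBasis hs hu).repr p ⟨x, hx⟩ < 0) : g ⬝ᵥ p = 1 := by
  refine hP.hasLatticePolar.dotProduct_eq_one_of_pos hg.mem_facetNormals hp hpl ?_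
  rw [hP.dotProduct_eq_sub_facetBasis_repr_mul hs hu hg hx]
  nlinarith [hg.dotProduct_nonpos]

-- Tilting `u` away from `x` stays inside the face of `P*` cut out by the other vertices, so this
-- face has a vertex different from `u`.
lemma exists_isNeighbor (hP : IsReflexive P) (hs : IsSimplicial P) (hu : u ∈ facetNormals P)
    (hx : x ∈ facetVertices P u) : ∃ g, IsNeighbor P u x g := by
  obtain ⟨e, he⟩ :=
    (dotProductEquiv ℝ (Fin d)).surjective ((hP.facetBasis hs hu).coord ⟨x, hx⟩)
  have hcoord (y : facetVertices P u) : e ⬝ᵥ (y : Fin d → ℝ) = Finsupp.single y 1 ⟨x, hx⟩ := by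
    rw [← hP.facetBasis_repr_coe hs hu]
    exact LinearMap.congr_fun he y
  have hex : e ⬝ᵥ x = 1 := by simpa using hcoord ⟨x, hx⟩
  have hey (y) (hy : y ∈ facetVertices P u) (hyx : y ≠ x) : e ⬝ᵥ y = 0 := by
    simpa [hyx] using hcoord ⟨y, hy⟩
  obtain ⟨ε, hε, hmem⟩ := exists_pos_add_smul_mem_dualPolytope hP.1 hu.1 (e := -e) fun y hy => by
    by_cases hyx : y = x
    · simp [hyx, hex]
    · simp [hey y hy hyx]
  set S := facetVertices P u \ {x}
  have hext := isExtreme_setOf_dotProduct_eq_one (K := P) (S := S) fun y hy => hy.1.1.1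
  set T := {g ∈ dualPolytope P | ∀ y ∈ S, g ⬝ᵥ y = 1}
  have hT : IsCompact T := by
    have hclosed : IsClosed {g : Fin d → ℝ | ∀ y ∈ S, g ⬝ᵥ y = 1} := by
      simp only [ofPred_forall]
      exact isClosed_biInter fun y _ => isClosed_eq (by fun_prop) continuous_const
    exact hP.2.2.isCompact.inter_right hclosed
  have hmemT : u + ε • -e ∈ T := ⟨hmem, fun y hy => by simp [hey y hy.1 hy.2, hy.1.2]⟩
  obtain ⟨g, hg, hle⟩ := exists_mem_extremePoints_le hT
    (-(dotProductEquiv ℝ (Fin d) x).toContinuousLinearMap) hmemT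
  have hgF : g ∈ facetNormals P := hext.extremePoints_subset_extremePoints hg
  have hgx : g ⬝ᵥ x ≤ 1 - ε := by
    simpa [dotProduct_comm x, hex, hx.2, le_sub_iff_add_le] using hle
  refine ⟨g, hgF, fun y hy hyx => hg.1.2 y ⟨hy, hyx⟩, ?_⟩
  exact hP.hasLatticePolar.dotProduct_nonpos_of_ne_one hgF hx.1.1
    (hP.1.isLP_of_mem_extremePoints hx.1) (by linarith)

lemma exists_mem_facetVertices_forall_isNeighbor (hP : IsReflexive P) (hs : IsSimplicial P)
    (hu : u ∈ facetNormals P) (hp : p ∈ P) (hpl : IsLP p) (hp0 : p ≠ 0) (hup : u ⬝ᵥ p = 0) :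
    ∃ x ∈ facetVertices P u, ∀ g, IsNeighbor P u x g → g ⬝ᵥ p = 1 := by
  obtain ⟨x, hneg⟩ : ∃ x, (hP.facetBasis hs hu).repr p x < 0 := by
    by_contra! h
    exact hp0 (hP.eq_zero_of_facetBasis_repr_nonneg hs hu h hup)
  exact ⟨x, x.2, fun g hg =>
    hP.dotProduct_eq_one_of_facetBasis_repr_neg hs hu hg x.2 hp hpl hup.ge hneg⟩

lemma dotProduct_eq_one_of_isNeighbor (hP : IsReflexive P) (hs : IsSimplicial P)
    (hu : u ∈ facetNormals P) (hv : v ∈ facetVertices P u) (hw : w ∈ P) (hwl : IsLP w)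
    (hw0 : w ≠ 0) (hvw : ¬ FacetAdj P v w) (huw : u ⬝ᵥ w = 0) (hg : IsNeighbor P u v g) :
    g ⬝ᵥ w = 1 := by
  obtain ⟨x, hx, h⟩ := hP.exists_mem_facetVertices_forall_isNeighbor hs hu hw hwl hw0 huw
  obtain rfl : x = v := by
    by_contra hxv
    obtain ⟨g', hg'⟩ := hP.exists_isNeighbor hs hu hx
    exact hvw ⟨g', hg'.mem_facetNormals, hg'.dotProduct_eq_one v hv (Ne.symm hxv), h g' hg'⟩
  exact h g hg

lemma facetVertices_eq_insert_of_isNeighbor (hP : IsReflexive P) (hs : IsSimplicial P)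
    (hu : u ∈ facetNormals P) (hx : x ∈ facetVertices P u) (hg : IsNeighbor P u x g)
    (hp : p ∈ facetVertices P g) (hup : u ⬝ᵥ p ≠ 1) :
    facetVertices P g = insert p (facetVertices P u \ {x}) := by
  refine (eq_of_subset_of_ncard_le (insert_subset hp fun q hq => ?_) ?_
    hP.finite_facetVertices).symm
  · exact ⟨hq.1.1, hg.dotProduct_eq_one q hq.1 hq.2⟩
  · rw [ncard_insert_of_notMem (fun h => hup h.1.2) (hP.finite_facetVertices.subset sdiff_subset),
      ncard_sdiff_singleton_add_one hx hP.finite_facetVertices, hP.ncard_facetVertices hs hu,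
      hP.ncard_facetVertices hs hg.mem_facetNormals]

end IsReflexive

end Neighbors

section NonadjacentTriples

variable {d : ℕ} {P : Set (Fin d → ℝ)} {u v w w' : Fin d → ℝ}

/-- Vertices `v`, `w ≠ w'` with `v ≁ w`, `v ≁ w'` and `w, w' ≠ -v`, the last condition being
written as `v + w ≠ 0`, `v + w' ≠ 0`. -/
structure IsNonadjacentTriple (P : Set (Fin d → ℝ)) (v w w' : Fin d → ℝ) : Prop where
  mem₀ : v ∈ P.extremePoints ℝ
  mem₁ : w ∈ P.extremePoints ℝ
  mem₂ : w' ∈ P.extremePoints ℝ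
  ne : w ≠ w'
  add_ne_zero₁ : v + w ≠ 0
  add_ne_zero₂ : v + w' ≠ 0
  not_facetAdj₁ : ¬ FacetAdj P v w
  not_facetAdj₂ : ¬ FacetAdj P v w'

namespace IsNonadjacentTriple

lemma symm (h : IsNonadjacentTriple P v w w') : IsNonadjacentTriple P v w' w :=
  ⟨h.mem₀, h.mem₂, h.mem₁, h.ne.symm, h.add_ne_zero₂, h.add_ne_zero₁, h.not_facetAdj₂,
    h.not_facetAdj₁⟩

lemma ne_zero₀ (h : IsNonadjacentTriple P v w w') (hP : IsReflexive P) : v ≠ 0 :=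
  have : Nontrivial (Fin d → ℝ) := ⟨w, w', h.ne⟩
  ne_zero_of_mem_extremePoints hP.2.1 h.mem₀

lemma ne_zero₁ (h : IsNonadjacentTriple P v w w') (hP : IsReflexive P) : w ≠ 0 :=
  have : Nontrivial (Fin d → ℝ) := ⟨w, w', h.ne⟩
  ne_zero_of_mem_extremePoints hP.2.1 h.mem₁

lemma ne₀₁ (h : IsNonadjacentTriple P v w w') (hP : IsReflexive P) : v ≠ w := by
  rintro rfl
  obtain ⟨u, hu, huv⟩ := hP.hasLatticePolar.exists_dotProduct_eq_one h.mem₀.1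
    (hP.1.isLP_of_mem_extremePoints h.mem₀) (h.ne_zero₀ hP)
  exact h.not_facetAdj₁ ⟨u, hu, huv, huv⟩

lemma isLP_add (h : IsNonadjacentTriple P v w w') (hP : IsReflexive P) : IsLP (v + w) :=
  (hP.1.isLP_of_mem_extremePoints h.mem₀).add (hP.1.isLP_of_mem_extremePoints h.mem₁)

lemma add_mem (h : IsNonadjacentTriple P v w w') (hP : IsReflexive P) : v + w ∈ P :=
  hP.hasLatticePolar.add_mem_of_not_facetAdj h.mem₀.1 (hP.1.isLP_of_mem_extremePoints h.mem₀)
    h.mem₁.1 (hP.1.isLP_of_mem_extremePoints h.mem₁) h.not_facetAdj₁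

lemma not_facetAdj_add (h : IsNonadjacentTriple P v w w') (hP : IsReflexive P)
    (hs : IsSimplicial P) : ¬ FacetAdj P (v + w) w' := by
  rintro ⟨u, hu, hsum, huw'⟩
  have hK := hP.hasLatticePolar
  have hvl := hP.1.isLP_of_mem_extremePoints h.mem₀
  rw [dotProduct_add] at hsum
  have huv : u ⬝ᵥ v ≤ 0 := hK.dotProduct_nonpos_of_ne_one hu h.mem₀.1 hvl fun huv =>
    h.not_facetAdj₂ ⟨u, hu, huv, huw'⟩
  have huw : u ⬝ᵥ w ≤ 1 := hK.mem_iff.1 h.mem₁.1 u hu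
  have hw : w ∈ facetVertices P u := ⟨h.mem₁, by linarith⟩
  obtain ⟨g, hg⟩ := hP.exists_isNeighbor hs hu hw
  have hgv : g ⬝ᵥ v = 1 := hP.dotProduct_eq_one_of_isNeighbor hs hu hw h.mem₀.1 hvl
    (h.ne_zero₀ hP) (mt FacetAdj.symm h.not_facetAdj₁) (by linarith) hg
  have hgw' : g ⬝ᵥ w' = 1 := hg.dotProduct_eq_one w' ⟨h.mem₂, huw'⟩ h.ne.symm
  exact h.not_facetAdj₂ ⟨g, hg.mem_facetNormals, hgv, hgw'⟩

lemma dotProduct_ne_zero (h : IsNonadjacentTriple P v w w') (hP : IsReflexive P)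
    (hs : IsSimplicial P) (hu : u ∈ facetNormals P) (huv : u ⬝ᵥ v = 0) (huw : u ⬝ᵥ w = 1) :
    u ⬝ᵥ w' ≠ 0 := by
  intro huw'
  have hvl := hP.1.isLP_of_mem_extremePoints h.mem₀
  obtain ⟨x, hx, hx'⟩ := hP.exists_mem_facetVertices_forall_isNeighbor hs hu (h.symm.add_mem hP)
    (h.symm.isLP_add hP) h.add_ne_zero₂ (by rw [dotProduct_add, huv, huw', add_zero])
  obtain ⟨g, hg⟩ := hP.exists_isNeighbor hs hu hx
  have hgF := hg.mem_facetNormals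
  have hsum := hx' g hg
  rcases eq_or_ne x w with rfl | hxw
  · have hgv : g ⬝ᵥ v = 1 := hP.dotProduct_eq_one_of_isNeighbor hs hu hx h.mem₀.1 hvl
      (h.ne_zero₀ hP) (mt FacetAdj.symm h.not_facetAdj₁) huv hg
    have hvg : v ∈ facetVertices P g := ⟨h.mem₀, hgv⟩
    have hug : IsNeighbor P g v u := by
      refine ⟨hu, fun y hy hyv => ?_, huv.le⟩
      rw [hP.facetVertices_eq_insert_of_isNeighbor hs hu hx hg hvg (by simp [huv])] at hy
      exact (hy.resolve_left hyv).1.2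
    rw [dotProduct_add, hgv, add_eq_left] at hsum
    exact one_ne_zero <| huw' ▸ (hP.dotProduct_eq_one_of_isNeighbor hs hgF hvg h.mem₂.1
      (hP.1.isLP_of_mem_extremePoints h.mem₂) (h.symm.ne_zero₁ hP) h.not_facetAdj₂ hsum hug).symm
  · exact h.symm.not_facetAdj_add hP hs
      ⟨g, hgF, hsum, hg.dotProduct_eq_one w ⟨h.mem₁, huw⟩ hxw.symm⟩

lemma facetBasis_repr_nonneg (h : IsNonadjacentTriple P v w w') (hP : IsReflexive P)
    (hs : IsSimplicial P) (hu : u ∈ facetNormals P) (huv : u ⬝ᵥ v = -1) (huw : u ⬝ᵥ w = 1)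
    (huw' : u ⬝ᵥ w' = 1) {x : facetVertices P u} (hxw : (x : Fin d → ℝ) ≠ w)
    (hxw' : (x : Fin d → ℝ) ≠ w') : 0 ≤ (hP.facetBasis hs hu).repr v x := by
  by_contra! hneg
  obtain ⟨g, hg⟩ := hP.exists_isNeighbor hs hu x.2
  have hw : (hP.facetBasis hs hu).repr w x = 0 := by
    rw [hP.facetBasis_repr_coe hs hu ⟨w, h.mem₁, huw⟩, Finsupp.single_eq_of_ne]
    exact fun hxw'' => hxw (congrArg Subtype.val hxw'')
  have hsum : g ⬝ᵥ (v + w) = 1 := hP.dotProduct_eq_one_of_facetBasis_repr_neg hs hu hg x.2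
    (h.add_mem hP) (h.isLP_add hP) (by rw [dotProduct_add, huv, huw, neg_add_cancel])
    (by simpa [hw] using hneg)
  exact h.not_facetAdj_add hP hs
    ⟨g, hg.mem_facetNormals, hsum, hg.dotProduct_eq_one w' ⟨h.mem₂, huw'⟩ hxw'.symm⟩

-- Otherwise the neighbor `g` across `w'` has `⟨g, v⟩ = ⟨g, w'⟩ = 0` and `⟨g, w⟩ = 1`.
lemma neg_half_le_facetBasis_repr (h : IsNonadjacentTriple P v w w') (hP : IsReflexive P)
    (hs : IsSimplicial P) (hu : u ∈ facetNormals P) (huv : u ⬝ᵥ v = -1) (huw : u ⬝ᵥ w = 1)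
    (hw' : w' ∈ facetVertices P u) : -(1 / 2) ≤ (hP.facetBasis hs hu).repr v ⟨w', hw'⟩ := by
  by_contra! hlt
  obtain ⟨g, hg⟩ := hP.exists_isNeighbor hs hu hw'
  have hgF := hg.mem_facetNormals
  have hw : (hP.facetBasis hs hu).repr w ⟨w', hw'⟩ = 0 := by
    rw [hP.facetBasis_repr_coe hs hu ⟨w, h.mem₁, huw⟩, Finsupp.single_eq_of_ne]
    exact fun hww' => h.ne (congrArg Subtype.val hww').symm
  have hsum : g ⬝ᵥ (v + w) = 1 := hP.dotProduct_eq_one_of_facetBasis_repr_neg hs hu hg hw'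
    (h.add_mem hP) (h.isLP_add hP) (by rw [dotProduct_add, huv, huw, neg_add_cancel])
    (by rw [map_add, Finsupp.add_apply, hw]; linarith)
  have hgw : g ⬝ᵥ w = 1 := hg.dotProduct_eq_one w ⟨h.mem₁, huw⟩ h.ne
  have hgv : g ⬝ᵥ v = 0 := by rwa [dotProduct_add, hgw, add_eq_right] at hsum
  have hformula := hP.dotProduct_eq_sub_facetBasis_repr_mul hs hu hg hw' v
  rw [hgv, huv] at hformula
  obtain ⟨n, hn, -⟩ := hP.hasLatticePolar.exists_int_dotProduct_le_one hgF h.mem₂.1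
    (hP.1.isLP_of_mem_extremePoints h.mem₂)
  have hn0 : n ≤ 0 := by exact_mod_cast hn ▸ hg.dotProduct_nonpos
  have hn1 : (-1 : ℝ) < n := by nlinarith [hg.dotProduct_nonpos]
  have hn1' : -1 < n := by exact_mod_cast hn1
  exact h.dotProduct_ne_zero hP hs hgF hgv hgw (by rw [hn, (by lia : n = 0), Int.cast_zero])

lemma add_eq_neg_two_smul (h : IsNonadjacentTriple P v w w') (hP : IsReflexive P)
    (hs : IsSimplicial P) (hu : u ∈ facetNormals P) (huv : u ⬝ᵥ v = -1) (huw : u ⬝ᵥ w = 1)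
    (huw' : u ⬝ᵥ w' = 1) : w + w' = -((2 : ℝ) • v) := by
  classical
  suffices hzero : v + (1 / 2 : ℝ) • (w + w') = 0 by
    linear_combination (norm := module) (2 : ℝ) • hzero
  have hw : w ∈ facetVertices P u := ⟨h.mem₁, huw⟩
  have hw' : w' ∈ facetVertices P u := ⟨h.mem₂, huw'⟩
  refine hP.eq_zero_of_facetBasis_repr_nonneg hs hu (fun x => ?_) ?_
  · have hrepr := hP.facetBasis_repr_coe hs hu
    simp only [map_add, map_smul, hrepr ⟨w, hw⟩, hrepr ⟨w', hw'⟩, Finsupp.add_apply,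
      Finsupp.smul_apply, Finsupp.single_apply, Subtype.ext_iff, smul_eq_mul]
    by_cases hxw : w = x
    · obtain rfl : x = ⟨w, hw⟩ := Subtype.ext hxw.symm
      rw [if_pos rfl, if_neg h.ne.symm]
      linarith [h.symm.neg_half_le_facetBasis_repr hP hs hu huv huw' hw]
    by_cases hxw' : w' = x
    · obtain rfl : x = ⟨w', hw'⟩ := Subtype.ext hxw'.symm
      rw [if_neg h.ne, if_pos rfl]
      linarith [h.neg_half_le_facetBasis_repr hP hs hu huv huw hw']
    · rw [if_neg hxw, if_neg hxw']
      linarith [h.facetBasis_repr_nonneg hP hs hu huv huw huw' (Ne.symm hxw) (Ne.symm hxw')]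
  · rw [dotProduct_add, dotProduct_smul, dotProduct_add, huv, huw, huw', smul_eq_mul]
    norm_num

lemma dotProduct_ne_one (h : IsNonadjacentTriple P v w w') (hP : IsReflexive P)
    (hs : IsSimplicial P) (hu : u ∈ facetNormals P) (hsum : u ⬝ᵥ (v + w + w') = 1) :
    u ⬝ᵥ v ≠ 1 := by
  intro huv
  have hK := hP.hasLatticePolar
  have hwl := hP.1.isLP_of_mem_extremePoints h.mem₁
  have hwl' := hP.1.isLP_of_mem_extremePoints h.mem₂
  rw [dotProduct_add, dotProduct_add] at hsum
  have huw : u ⬝ᵥ w ≤ 0 := hK.dotProduct_nonpos_of_ne_one hu h.mem₁.1 hwl fun huw =>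
    h.not_facetAdj₁ ⟨u, hu, huv, huw⟩
  have huw' : u ⬝ᵥ w' ≤ 0 := hK.dotProduct_nonpos_of_ne_one hu h.mem₂.1 hwl' fun huw' =>
    h.not_facetAdj₂ ⟨u, hu, huv, huw'⟩
  have hv : v ∈ facetVertices P u := ⟨h.mem₀, huv⟩
  obtain ⟨g, hg⟩ := hP.exists_isNeighbor hs hu hv
  have hgw : g ⬝ᵥ w = 1 := hP.dotProduct_eq_one_of_isNeighbor hs hu hv h.mem₁.1 hwl
    (h.ne_zero₁ hP) h.not_facetAdj₁ (by linarith) hg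
  have hgw' : g ⬝ᵥ w' = 1 := hP.dotProduct_eq_one_of_isNeighbor hs hu hv h.mem₂.1 hwl'
    (h.symm.ne_zero₁ hP) h.not_facetAdj₂ (by linarith) hg
  have hmem : w' ∈ facetVertices P g := ⟨h.mem₂, hgw'⟩
  rw [hP.facetVertices_eq_insert_of_isNeighbor hs hu hv hg ⟨h.mem₁, hgw⟩ (by linarith)] at hmem
  rcases hmem with heq | hmem
  · exact h.ne heq.symm
  · linarith [hmem.1.2]

lemma exists_add_eq_neg_smul (h : IsNonadjacentTriple P v w w') (hP : IsReflexive P)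
    (hs : IsSimplicial P) : ∃ c : ℝ, 0 < c ∧ w + w' = -(c • v) := by
  have hK := hP.hasLatticePolar
  have hwl' := hP.1.isLP_of_mem_extremePoints h.mem₂
  by_cases hzero : v + w + w' = 0
  · exact ⟨1, one_pos, by rw [one_smul, eq_neg_iff_add_eq_zero, ← hzero]; abel⟩
  obtain ⟨u, hu, hsum⟩ := hK.exists_dotProduct_eq_one
    (hK.add_mem_of_not_facetAdj (h.add_mem hP) (h.isLP_add hP) h.mem₂.1 hwl'
      (h.not_facetAdj_add hP hs)) ((h.isLP_add hP).add hwl') hzero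
  have huv1 := h.dotProduct_ne_one hP hs hu hsum
  rw [dotProduct_add, dotProduct_add] at hsum
  obtain ⟨l, hl, hl1⟩ := hK.exists_int_dotProduct_le_one hu h.mem₀.1
    (hP.1.isLP_of_mem_extremePoints h.mem₀)
  obtain ⟨m, hm, hm1⟩ := hK.exists_int_dotProduct_le_one hu h.mem₁.1
    (hP.1.isLP_of_mem_extremePoints h.mem₁)
  obtain ⟨n, hn, hn1⟩ := hK.exists_int_dotProduct_le_one hu h.mem₂.1 hwl'
  have hlmn : l + m + n = 1 := by rw [hl, hm, hn] at hsum; exact_mod_cast hsum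
  have hl_ne : l ≠ 1 := by rintro rfl; exact huv1 (by rw [hl, Int.cast_one])
  obtain ⟨rfl, rfl, rfl⟩ | ⟨rfl, rfl, rfl⟩ | ⟨rfl, rfl, rfl⟩ : l = -1 ∧ m = 1 ∧ n = 1 ∨
      l = 0 ∧ m = 1 ∧ n = 0 ∨ l = 0 ∧ m = 0 ∧ n = 1 := by lia
  all_goals push_cast at hl hm hn
  · exact ⟨2, two_pos, h.add_eq_neg_two_smul hP hs hu hl hm hn⟩
  · exact absurd hn (h.dotProduct_ne_zero hP hs hu hl hm)
  · exact absurd hm (h.symm.dotProduct_ne_zero hP hs hu hl hn)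

lemma linearIndependent_pair (h : IsNonadjacentTriple P v w w') (hP : IsReflexive P) :
    LinearIndependent ℝ ![v, w] :=
  hP.hasLatticePolar.linearIndependent_pair h.mem₀.1 (hP.1.isLP_of_mem_extremePoints h.mem₀)
    h.mem₁.1 (hP.1.isLP_of_mem_extremePoints h.mem₁) (h.ne_zero₀ hP) (h.ne_zero₁ hP) (h.ne₀₁ hP)
    h.add_ne_zero₁

lemma finrank_span (h : IsNonadjacentTriple P v w w') (hP : IsReflexive P)
    (hs : IsSimplicial P) : finrank ℝ (Submodule.span ℝ {v, w, w'}) = 2 := by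
  obtain ⟨c, -, hrel⟩ := h.exists_add_eq_neg_smul hP hs
  have hw' : w' ∈ Submodule.span ℝ {v, w} :=
    Submodule.mem_span_pair.2 ⟨-c, -1, by linear_combination (norm := module) -hrel⟩
  have hspan : Submodule.span ℝ {v, w, w'} = Submodule.span ℝ (range ![v, w]) := by
    rw [Matrix.range_cons_cons_empty, pair_comm w, insert_comm, Submodule.span_insert_eq_span hw']
  rw [hspan, finrank_span_eq_card (h.linearIndependent_pair hP), Fintype.card_fin]

lemma isReflexive_preimage_and_five_le_ncard (h : IsNonadjacentTriple P v w w')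
    (hP : IsReflexive P) (hs : IsSimplicial P) {φ : (Fin 2 → ℝ) →ₗ[ℝ] (Fin d → ℝ)}
    (hφ : Function.Injective φ) (hl : ∀ x, IsLP x → IsLP (φ x)) {a b b' : Fin 2 → ℝ}
    (hal : IsLP a) (hbl : IsLP b) (hbl' : IsLP b') (ha : φ a = v) (hb : φ b = w) (hb' : φ b' = w') :
    IsReflexive (φ ⁻¹' P) ∧ 5 ≤ ((φ ⁻¹' P).extremePoints ℝ).ncard := by
  subst ha hb hb'
  obtain ⟨c, hc, hrel⟩ := h.exists_add_eq_neg_smul hP hs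
  refine isReflexive_and_five_le_ncard_extremePoints (hP.hasLatticePolar.preimage hφ hl)
    (mem_extremePoints_preimage hφ h.mem₀) hal (mem_extremePoints_preimage hφ h.mem₁) hbl
    (mem_extremePoints_preimage hφ h.mem₂) hbl' (ne_of_apply_ne φ (h.ne₀₁ hP))
    (ne_of_apply_ne φ ?_) (ne_of_apply_ne φ ?_)
    (by simpa using h.add_mem hP) (by simpa using h.symm.add_mem hP) hc
    (hφ (by simpa using hrel))
  · simpa using h.add_ne_zero₁
  · simpa using h.add_ne_zero₂

end IsNonadjacentTriple

end NonadjacentTriples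

/-- for pairwise distinct vertices `v, w, w'` of a simplicial reflexive polytope
with `w ≠ -v ≠ w'`, `v ≁ w`, `v ≁ w'`, the span `L` of `{v,w,w'}` is `2`-dimensional and
`P ∩ L` is a reflexive polygon (w.r.t. the lattice `ℤ^d ∩ L`) with at least five vertices. -/
theorem stmt6 {d : ℕ} (P : Set (Fin d → ℝ)) (hP : IsReflexive P) (hs : IsSimplicial P)
    (v w w' : Fin d → ℝ)
    (hv : v ∈ Set.extremePoints ℝ P) (hw : w ∈ Set.extremePoints ℝ P)
    (hw' : w' ∈ Set.extremePoints ℝ P)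
    (hvw : v ≠ w) (hvw' : v ≠ w') (hww' : w ≠ w')
    (h1 : w ≠ -v) (h2 : w' ≠ -v)
    (h3 : ¬ ∃ F, IsFacet P F ∧ v ∈ F ∧ w ∈ F)
    (h4 : ¬ ∃ F, IsFacet P F ∧ v ∈ F ∧ w' ∈ F) :
    Module.finrank ℝ (Submodule.span ℝ ({v, w, w'} : Set (Fin d → ℝ))) = 2 ∧
    ∀ φ : (Fin 2 → ℝ) →ₗ[ℝ] (Fin d → ℝ),
      Function.Injective φ →
      Set.range φ = (Submodule.span ℝ ({v, w, w'} : Set (Fin d → ℝ)) : Set (Fin d → ℝ)) →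
      φ '' {x | IsLP x} =
        {y ∈ (Submodule.span ℝ ({v, w, w'} : Set (Fin d → ℝ)) : Set (Fin d → ℝ)) | IsLP y} →
      IsReflexive (φ ⁻¹' (P ∩ (Submodule.span ℝ ({v, w, w'} : Set (Fin d → ℝ)) : Set (Fin d → ℝ)))) ∧
      5 ≤ (Set.extremePoints ℝ
        (φ ⁻¹' (P ∩ (Submodule.span ℝ ({v, w, w'} : Set (Fin d → ℝ)) : Set (Fin d → ℝ))))).ncard := by
  have h : IsNonadjacentTriple P v w w' :=
    ⟨hv, hw, hw', hww', fun h => h1 (eq_neg_of_add_eq_zero_right h),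
      fun h => h2 (eq_neg_of_add_eq_zero_right h), fun h => h3 (h.exists_isFacet hP.1 hv.1 hw.1),
      fun h => h4 (h.exists_isFacet hP.1 hv.1 hw'.1)⟩
  refine ⟨h.finrank_span hP hs, fun φ hφ hrange hlat => ?_⟩
  have hpre {x} (hx : x ∈ P.extremePoints ℝ) (hmem : x ∈ ({v, w, w'} : Set (Fin d → ℝ))) :
      ∃ a, IsLP a ∧ φ a = x :=
    hlat.ge ⟨Submodule.subset_span hmem, hP.1.isLP_of_mem_extremePoints hx⟩
  have hl (x) (hx : IsLP x) : IsLP (φ x) := (hlat.le ⟨x, hx, rfl⟩).2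
  obtain ⟨a, hal, ha⟩ := hpre hv (by simp)
  obtain ⟨b, hbl, hb⟩ := hpre hw (by simp)
  obtain ⟨b', hbl', hb'⟩ := hpre hw' (by simp)
  rw [← hrange, preimage_inter_range]
  exact h.isReflexive_preimage_and_five_le_ncard hP hs hφ hl hal hbl hbl' ha hb hb'
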